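/- Let G be a connected simple graph on a finite vertex set V containing an edge {v, w} (a clean short circuit), and suppose there is a path v = x₀, x₁, …, x_{k−1} = w in G with k ≥ 3 distinct vertices such that every internal vertex x₁, …, x_{k−2} has degree exactly 2 in G (its only neighbors are its two neighbors on the path). If |V| − (k−2) ≥ 3, then the total island count vanishes: β_G(−1) = 0. -/

import Mathlib

open Polynomial

/-- `islandF G S` is the quantity `f_G(S) = 2·c_G(S) + e_G(S) − |S|`, where `c_G(S)`
and `e_G(S)` are the numbers of connected components and edges of the induced
subgraph `G[S]`.  For a planar graph it equals the total number of faces of a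
planar embedding of `G[S]`, summed over connected components. -/
noncomputable def islandF {V : Type*} [Fintype V] [DecidableEq V]
    (G : SimpleGraph V) (S : Finset V) : ℤ :=
  2 * Nat.card ((G.induce (S : Set V)).ConnectedComponent)
    + Nat.card ((G.induce (S : Set V)).edgeSet) - S.card

/-- The total island boundary polynomial `β_G(x) = Σ_{∅ ≠ S ⊆ V} f_G(S)·x^{|S|−1}`. -/
noncomputable def islandPoly {V : Type*} [Fintype V] [DecidableEq V]
    (G : SimpleGraph V) : Polynomial ℤ :=
  ∑ S ∈ Finset.univ.powerset.filter (fun S : Finset V => S.Nonempty),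
    Polynomial.C (islandF G S) * Polynomial.X ^ (S.card - 1)

/-!
Suppose `V = A ∪ B`, no edge joins `A \ B` to `B \ A`, and `A ∩ B` is a clique. Then the numbers of
components, edges and vertices are all modular on the pairs `S ∩ A`, `S ∩ B`, so that
`f(S) = f(S ∩ A) + f(S ∩ B) - f(S ∩ A ∩ B)`. If `A` and `B` are proper subsets, each summand ignores
some vertex `z`, and the signed sum over all `S` of a function ignoring `z` vanishes by pairing `S`
with `S ∪ {z}`. In a clean short circuit the adjacent pair `{v, w}` separates the interior of the
path from the remaining vertices, of which there is at least one.

The modularity of the number of components is the dimension formula for sums and intersections of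
the spaces of functions constant along edges: separation computes the intersection, and the clique
condition computes the sum.
-/

section SignedSums

variable {V R : Type*} [Fintype V] [DecidableEq V] [Ring R]

lemma sum_neg_one_pow_card_mul_eq_zero {h : Finset V → R} {z : V}
    (hz : ∀ S, z ∉ S → h (insert z S) = h S) :
    ∑ S : Finset V, (-1) ^ S.card * h S = 0 := by
  rw [← Finset.powerset_univ, ← Finset.insert_erase (Finset.mem_univ z),
    Finset.sum_powerset_insert (Finset.notMem_erase z _), ← Finset.sum_add_distrib]
  refine Finset.sum_eq_zero fun S hS ↦ ?_
  have hzS : z ∉ S := fun hzS ↦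
    Finset.notMem_erase z _ (Finset.mem_powerset.1 hS hzS)
  rw [Finset.card_insert_of_notMem hzS, hz S hzS, pow_succ, mul_neg_one, neg_mul, add_neg_cancel]

lemma sum_neg_one_pow_card_mul_inter_eq_zero (h : Finset V → R) {A : Finset V}
    (hA : A ≠ Finset.univ) : ∑ S : Finset V, (-1) ^ S.card * h (S ∩ A) = 0 := by
  obtain ⟨z, hz⟩ : ∃ z, z ∉ A := by simpa [Finset.eq_univ_iff_forall] using hA
  exact sum_neg_one_pow_card_mul_eq_zero fun S _ ↦ by rw [Finset.insert_inter_of_notMem hz]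

end SignedSums

section Separations

variable {V : Type*} {G : SimpleGraph V} {A B : Set V}

/-- `(A, B)` is a separation of `G[A ∪ B]`: no edge of `G` joins `A \ B` to `B \ A`. The two sides
need not cover the vertex set, so that separations restrict to induced subgraphs. -/
def IsSeparation (G : SimpleGraph V) (A B : Set V) : Prop :=
  ∀ ⦃a⦄, a ∈ A \ B → ∀ ⦃b⦄, b ∈ B \ A → ¬G.Adj a b

lemma isSeparation_compl_of_neighborSet_subset {I : Set V} (h : ∀ x ∈ I, G.neighborSet x ⊆ B) :
    IsSeparation G Iᶜ B :=
  fun _a ha _b hb hab ↦ ha.2 (h _ (not_not.1 hb.2) hab.symm)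

namespace IsSeparation

lemma inter_left (h : IsSeparation G A B) (S : Set V) : IsSeparation G (S ∩ A) (S ∩ B) :=
  fun _a ha _b hb ↦ h ⟨ha.1.2, fun haB ↦ ha.2 ⟨ha.1.1, haB⟩⟩ ⟨hb.1.2, fun hbA ↦ hb.2 ⟨hb.1.1, hbA⟩⟩

lemma mem_and_mem_or_mem_and_mem (h : IsSeparation G A B) {a b : V} (ha : a ∈ A ∪ B)
    (hb : b ∈ A ∪ B) (hab : G.Adj a b) : a ∈ A ∧ b ∈ A ∨ a ∈ B ∧ b ∈ B := by
  have hab' : a ∈ A \ B → b ∉ B \ A := fun ha hb ↦ h ha hb hab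
  have hba' : b ∈ A \ B → a ∉ B \ A := fun hb ha ↦ h hb ha hab.symm
  simp only [Set.mem_union, Set.mem_sdiff] at *
  tauto

end IsSeparation

end Separations

section Edges

variable {V : Type*} (G : SimpleGraph V)

lemma natCard_edgeSet_induce (X : Set V) :
    Nat.card (G.induce X).edgeSet = (G.edgeSet ∩ X.sym2).ncard := by
  have himage : Sym2.map Subtype.val '' (G.induce X).edgeSet = G.edgeSet ∩ X.sym2 := by
    ext e
    constructor
    · rintro ⟨⟨a, b⟩, hab, rfl⟩
      exact ⟨hab, a.2, b.2⟩
    · induction e with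
      | h a b => exact fun ⟨hab, ha, hb⟩ ↦ ⟨s(⟨a, ha⟩, ⟨b, hb⟩), hab, rfl⟩
  rw [← himage, Set.ncard_image_of_injective _ (Sym2.map.injective Subtype.val_injective),
    Nat.card_coe_set_eq]

variable {G}

lemma IsSeparation.natCard_edgeSet_union_add_inter [Finite V] {A B : Set V}
    (h : IsSeparation G A B) :
    Nat.card (G.induce (A ∪ B)).edgeSet + Nat.card (G.induce (A ∩ B)).edgeSet =
      Nat.card (G.induce A).edgeSet + Nat.card (G.induce B).edgeSet := by
  have hunion : G.edgeSet ∩ (A ∪ B).sym2 = G.edgeSet ∩ A.sym2 ∪ G.edgeSet ∩ B.sym2 := by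
    ext ⟨a, b⟩
    have hsides := h.mem_and_mem_or_mem_and_mem (a := a) (b := b)
    simp only [Set.mem_inter_iff, Set.mem_union, SimpleGraph.mem_edgeSet, Set.mk_mem_sym2_iff] at *
    tauto
  simp only [natCard_edgeSet_induce]
  rw [hunion, Set.sym2_inter, Set.inter_inter_distrib_left, Set.ncard_union_add_ncard_inter]

end Edges

section Components

lemma finrank_comap_add_finrank {K E F : Type*} [DivisionRing K] [AddCommGroup E] [Module K E]
    [AddCommGroup F] [Module K F] [Module.Finite K E] [Module.Finite K F] {f : E →ₗ[K] F}
    (hf : Function.Surjective f) (W : Submodule K F) :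
    Module.finrank K (W.comap f) + Module.finrank K F =
      Module.finrank K W + Module.finrank K E := by
  have hrank := (W.mkQ ∘ₗ f).finrank_range_add_finrank_ker
  have hsurj : Function.Surjective (W.mkQ ∘ₗ f) := W.mkQ_surjective.comp hf
  rw [LinearMap.range_eq_top.2 hsurj, finrank_top, LinearMap.ker_comp,
    Submodule.ker_mkQ] at hrank
  have hquot := W.finrank_quotient_add_finrank
  omega

variable {V : Type*} {G : SimpleGraph V}

/-- The space of real functions on `V` that are constant along every edge of `G[X]`, their values
outside `X` being arbitrary. Its dimension counts the components of `G[X]`; keeping all functions on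
`V` puts these spaces for varying `X` in one submodule lattice. -/
def edgeConstant (G : SimpleGraph V) (X : Set V) : Submodule ℝ (V → ℝ) where
  carrier := {f | ∀ ⦃a⦄, a ∈ X → ∀ ⦃b⦄, b ∈ X → G.Adj a b → f a = f b}
  add_mem' hf hg _ ha _ hb hab := congrArg₂ (· + ·) (hf ha hb hab) (hg ha hb hab)
  zero_mem' _ _ _ _ _ := rfl
  smul_mem' c _ hf _ ha _ hb hab := congrArg (c • ·) (hf ha hb hab)

lemma edgeConstant_eq_comap_ker_lapMatrix (G : SimpleGraph V) (X : Set V) [Fintype X]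
    [DecidableEq X] [DecidableRel (G.induce X).Adj] :
    edgeConstant G X = ((G.induce X).lapMatrix ℝ).toLin'.ker.comap
      (LinearMap.funLeft ℝ ℝ Subtype.val) := by
  ext f
  rw [Submodule.mem_comap, LinearMap.mem_ker, Matrix.toLin'_apply,
    SimpleGraph.lapMatrix_mulVec_eq_zero_iff_forall_adj]
  exact ⟨fun h a b ↦ h a.2 b.2, fun h a ha b hb ↦ h ⟨a, ha⟩ ⟨b, hb⟩⟩

lemma finrank_edgeConstant_add_ncard [Finite V] (G : SimpleGraph V) (X : Set V) :
    Module.finrank ℝ (edgeConstant G X) + X.ncard =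
      Nat.card (G.induce X).ConnectedComponent + Nat.card V := by
  classical
  have := Fintype.ofFinite V
  have hrank := finrank_comap_add_finrank
    (LinearMap.funLeft_surjective_of_injective ℝ ℝ _ Subtype.val_injective)
    ((G.induce X).lapMatrix ℝ).toLin'.ker
  rwa [← edgeConstant_eq_comap_ker_lapMatrix,
    ← SimpleGraph.card_connectedComponent_eq_finrank_ker_toLin'_lapMatrix,
    Module.finrank_fintype_fun_eq_card, Module.finrank_fintype_fun_eq_card,
    ← Nat.card_eq_fintype_card, ← Nat.card_eq_fintype_card, ← Nat.card_eq_fintype_card,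
    Nat.card_coe_set_eq] at hrank

lemma edgeConstant_anti (G : SimpleGraph V) : Antitone (edgeConstant G) :=
  fun _ _ hXY _ hf _ ha _ hb ↦ hf (hXY ha) (hXY hb)

variable {A B : Set V}

lemma IsSeparation.edgeConstant_inf (h : IsSeparation G A B) :
    edgeConstant G A ⊓ edgeConstant G B = edgeConstant G (A ∪ B) := by
  refine le_antisymm (fun f ⟨hfA, hfB⟩ a ha b hb hab ↦ ?_) (le_inf
    (edgeConstant_anti G Set.subset_union_left) (edgeConstant_anti G Set.subset_union_right))
  obtain ⟨haA, hbA⟩ | ⟨haB, hbB⟩ := h.mem_and_mem_or_mem_and_mem ha hb hab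
  exacts [hfA haA hbA hab, hfB haB hbB hab]

lemma exists_forall_eq_of_isClique {X : Set V} (hX : G.IsClique X) {f : V → ℝ}
    (hf : f ∈ edgeConstant G X) : ∃ c, ∀ x ∈ X, f x = c := by
  obtain rfl | ⟨x₀, hx₀⟩ := X.eq_empty_or_nonempty
  · simp
  · refine ⟨f x₀, fun x hx ↦ ?_⟩
    obtain rfl | hne := eq_or_ne x x₀
    · rfl
    · exact hf hx hx₀ (hX hx hx₀ hne)

lemma edgeConstant_sup_of_isClique (hclique : G.IsClique (A ∩ B)) :
    edgeConstant G A ⊔ edgeConstant G B = edgeConstant G (A ∩ B) := by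
  refine le_antisymm (sup_le (edgeConstant_anti G Set.inter_subset_left)
    (edgeConstant_anti G Set.inter_subset_right)) fun f hf ↦ ?_
  obtain ⟨c, hc⟩ := exists_forall_eq_of_isClique hclique hf
  let g := A.indicator (f - fun _ ↦ c)
  have hA : f - g ∈ edgeConstant G A := fun a ha b hb _ ↦ by simp [g, ha, hb]
  have hB : g ∈ edgeConstant G B := by
    have hzero : ∀ b ∈ B, g b = 0 := fun b hb ↦
      Set.indicator_apply_eq_zero.2 fun hbA ↦ sub_eq_zero.2 (hc b ⟨hbA, hb⟩)
    exact fun a ha b hb _ ↦ (hzero a ha).trans (hzero b hb).symm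
  exact Submodule.mem_sup.2 ⟨f - g, hA, g, hB, sub_add_cancel f g⟩

lemma IsSeparation.natCard_connectedComponent_union_add_inter [Finite V] (h : IsSeparation G A B)
    (hclique : G.IsClique (A ∩ B)) :
    Nat.card (G.induce (A ∪ B)).ConnectedComponent +
        Nat.card (G.induce (A ∩ B)).ConnectedComponent =
      Nat.card (G.induce A).ConnectedComponent + Nat.card (G.induce B).ConnectedComponent := by
  have hdim := Submodule.finrank_sup_add_finrank_inf_eq (edgeConstant G A) (edgeConstant G B)
  rw [h.edgeConstant_inf, edgeConstant_sup_of_isClique hclique] at hdim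
  have hunion := finrank_edgeConstant_add_ncard G (A ∪ B)
  have hinter := finrank_edgeConstant_add_ncard G (A ∩ B)
  have hA := finrank_edgeConstant_add_ncard G A
  have hB := finrank_edgeConstant_add_ncard G B
  have hcard := Set.ncard_union_add_ncard_inter A B
  omega

end Components

section Islands

variable {V : Type*} [Fintype V] [DecidableEq V] {G : SimpleGraph V}

lemma islandF_empty (G : SimpleGraph V) : islandF G ∅ = 0 := by
  simp [islandF]

lemma eval_neg_one_islandPoly (G : SimpleGraph V) :
    (islandPoly G).eval (-1) = -∑ S : Finset V, (-1) ^ S.card * islandF G S := by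
  have hterm (S : Finset V) (hS : S.Nonempty) :
      islandF G S * (-1) ^ (S.card - 1) = -((-1) ^ S.card * islandF G S) := by
    obtain ⟨m, hm⟩ := Nat.exists_eq_add_one.2 hS.card_pos
    rw [hm, Nat.add_sub_cancel, pow_succ]
    ring
  simp only [islandPoly, Polynomial.eval_finsetSum, Polynomial.eval_mul, Polynomial.eval_C,
    Polynomial.eval_pow, Polynomial.eval_X, Finset.powerset_univ]
  rw [Finset.sum_congr rfl fun S hS ↦ hterm S (Finset.mem_filter.1 hS).2, Finset.sum_neg_distrib,
    Finset.sum_filter_of_ne]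
  rintro S - hS
  contrapose! hS
  rw [hS, islandF_empty, mul_zero]

lemma IsSeparation.islandF_union_add_inter {A B : Finset V} (h : IsSeparation G A B)
    (hclique : G.IsClique (A ∩ B : Set V)) :
    islandF G (A ∪ B) + islandF G (A ∩ B) = islandF G A + islandF G B := by
  have hcomponents := h.natCard_connectedComponent_union_add_inter hclique
  have hedges := h.natCard_edgeSet_union_add_inter
  have hcard := Finset.card_union_add_card_inter A B
  rw [← Finset.coe_union, ← Finset.coe_inter] at hcomponents hedges
  simp only [islandF]
  omega

lemma IsSeparation.islandF_eq_add_sub {A B : Finset V} (h : IsSeparation G A B)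
    (hcover : A ∪ B = Finset.univ) (hclique : G.IsClique (A ∩ B : Set V)) (S : Finset V) :
    islandF G S = islandF G (S ∩ A) + islandF G (S ∩ B) - islandF G (S ∩ (A ∩ B)) := by
  have hS : IsSeparation G ↑(S ∩ A) ↑(S ∩ B) := by
    simpa only [Finset.coe_inter] using h.inter_left S
  have hSclique : G.IsClique (↑(S ∩ A) ∩ ↑(S ∩ B) : Set V) :=
    hclique.subset (Set.inter_subset_inter (by simp) (by simp))
  have hmodular := hS.islandF_union_add_inter hSclique
  rw [← Finset.inter_union_distrib_left, hcover, Finset.inter_univ,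
    ← Finset.inter_inter_distrib_left] at hmodular
  exact eq_sub_of_add_eq hmodular

theorem islandCount_clean_short_circuit_general (G : SimpleGraph V) {A B : Set V}
    (hsep : IsSeparation G A B) (hclique : G.IsClique (A ∩ B)) (hcover : A ∪ B = Set.univ)
    (hA : A ≠ Set.univ) (hB : B ≠ Set.univ) :
    (islandPoly G).eval (-1) = 0 := by
  lift A to Finset V using A.toFinite
  lift B to Finset V using B.toFinite
  norm_cast at hcover hA hB
  have hAB : A ∩ B ≠ Finset.univ := fun h ↦ hA (Finset.inter_eq_univ.1 h).1
  have hsplit (S : Finset V) := hsep.islandF_eq_add_sub hcover hclique S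
  rw [eval_neg_one_islandPoly, neg_eq_zero]
  calc ∑ S : Finset V, (-1) ^ S.card * islandF G S
    _ = ∑ S : Finset V, (-1) ^ S.card * islandF G (S ∩ A) +
          ∑ S : Finset V, (-1) ^ S.card * islandF G (S ∩ B) -
          ∑ S : Finset V, (-1) ^ S.card * islandF G (S ∩ (A ∩ B)) := by
        rw [← Finset.sum_add_distrib, ← Finset.sum_sub_distrib]
        exact Finset.sum_congr rfl fun S _ ↦ by rw [hsplit S, mul_sub, mul_add]
    _ = 0 := by
        rw [sum_neg_one_pow_card_mul_inter_eq_zero _ hA,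
          sum_neg_one_pow_card_mul_inter_eq_zero _ hB,
          sum_neg_one_pow_card_mul_inter_eq_zero _ hAB, add_zero, sub_zero]

end Islands

section ShortCircuits

variable {V : Type*} {G : SimpleGraph V} {k : ℕ} {p : ℕ → V}

lemma isSeparation_compl_image_Ioo_image_Iio
    (hdeg : ∀ i ∈ Set.Ioo 0 (k - 1), G.neighborSet (p i) ⊆ {p (i - 1), p (i + 1)}) :
    IsSeparation G (p '' Set.Ioo 0 (k - 1))ᶜ (p '' Set.Iio k) := by
  refine isSeparation_compl_of_neighborSet_subset ?_
  rintro _ ⟨i, hi, rfl⟩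
  refine (hdeg i hi).trans (Set.pair_subset ?_ ?_) <;>
    exact Set.mem_image_of_mem p (by simp only [Set.mem_Ioo, Set.mem_Iio] at *; omega)

lemma isClique_compl_image_Ioo_inter_image_Iio (hends : G.Adj (p 0) (p (k - 1))) :
    G.IsClique ((p '' Set.Ioo 0 (k - 1))ᶜ ∩ p '' Set.Iio k) := by
  have hpair : G.IsClique {p 0, p (k - 1)} := SimpleGraph.isClique_pair.2 fun _ ↦ hends
  refine hpair.subset ?_
  rintro _ ⟨hinterior, i, hi, rfl⟩
  have hi' : i ∉ Set.Ioo 0 (k - 1) := fun h ↦ hinterior ⟨i, h, rfl⟩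
  obtain rfl | rfl : i = 0 ∨ i = k - 1 := by
    simp only [Set.mem_Ioo, Set.mem_Iio] at *
    omega
  all_goals simp

lemma compl_image_Ioo_union_image_Iio (p : ℕ → V) (k : ℕ) :
    (p '' Set.Ioo 0 (k - 1))ᶜ ∪ p '' Set.Iio k = Set.univ := by
  rw [← Set.compl_subset_iff_union, compl_compl]
  exact Set.image_mono fun i hi ↦ hi.2.trans_le (Nat.sub_le k 1)

lemma image_Iio_ne_univ_of_lt_natCard (p : ℕ → V) (hk : k < Nat.card V) :
    p '' Set.Iio k ≠ Set.univ := fun h ↦ by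
  have hle : (p '' Set.Iio k).ncard ≤ (Set.Iio k).ncard := Set.ncard_image_le (Set.finite_Iio k)
  rw [h, Set.ncard_univ, Set.ncard_Iio_nat] at hle
  exact hle.not_gt hk

end ShortCircuits

theorem islandCount_clean_short_circuit {V : Type*} [Fintype V] [DecidableEq V]
    (G : SimpleGraph V) (hconn : G.Connected)
    (v w : V) (hvw : G.Adj v w)
    (k : ℕ) (hk : 3 ≤ k) (p : ℕ → V)
    (hinj : ∀ i j : ℕ, i < k → j < k → p i = p j → i = j)
    (h0 : p 0 = v) (hlast : p (k - 1) = w)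
    (hpath : ∀ i : ℕ, i + 1 < k → G.Adj (p i) (p (i + 1)))
    (hdeg : ∀ i : ℕ, 1 ≤ i → i ≤ k - 2 →
      ∀ u : V, G.Adj (p i) u → u = p (i - 1) ∨ u = p (i + 1))
    (hcard : 3 ≤ Fintype.card V - (k - 2)) :
    (islandPoly G).eval (-1) = 0 := by
  subst h0 hlast
  have hsep := isSeparation_compl_image_Ioo_image_Iio fun i hi ↦
    hdeg i hi.1 (Nat.le_sub_one_of_lt hi.2)
  have hclique := isClique_compl_image_Ioo_inter_image_Iio hvw
  have hinterior : (p '' Set.Ioo 0 (k - 1)).Nonempty := ⟨p 1, 1, ⟨one_pos, by omega⟩, rfl⟩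
  have hk_card : k < Nat.card V := by rw [Nat.card_eq_fintype_card]; omega
  exact islandCount_clean_short_circuit_general G hsep hclique
    (compl_image_Ioo_union_image_Iio p k) (Set.compl_ne_univ.2 hinterior)
    (image_Iio_ne_univ_of_lt_natCard p hk_card)
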